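/- arXiv:1911.08154 — 2 statements merged into one kernel-verified Lean document; each statement's English description precedes it below -/
import Mathlib

section
/- Let T be a tree. An edge of T is α₃-critical if and only if it is μ₃-critical. -/
open SimpleGraph

/-- `l` is a (not necessarily induced) `k`-path in `G`: a list of `k` pairwise distinct
vertices in which consecutive vertices are adjacent. -/
def IsKPath {V : Type*} (G : SimpleGraph V) (k : ℕ) (l : List V) : Prop :=
  l.length = k ∧ l.Nodup ∧ l.Chain' G.Adj

/-- A `k`-matching in `G`: a finite set of pairwise vertex-disjoint `k`-paths. -/
def IsKMatching {V : Type*} (G : SimpleGraph V) (k : ℕ) (M : Finset (List V)) : Prop :=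
  (∀ l ∈ M, IsKPath G k l) ∧
    (M : Set (List V)).Pairwise fun l₁ l₂ => ∀ v ∈ l₁, v ∉ l₂

/-- The `k`-matching number `μ_k(G)`: the maximum cardinality of a `k`-matching. -/
noncomputable def kMatchNum {V : Type*} (G : SimpleGraph V) (k : ℕ) : ℕ :=
  sSup {n | ∃ M : Finset (List V), IsKMatching G k M ∧ M.card = n}

/-- A maximum `k`-matching: a `k`-matching of cardinality `μ_k(G)`. -/
def IsMaxKMatching {V : Type*} (G : SimpleGraph V) (k : ℕ) (M : Finset (List V)) : Prop :=
  IsKMatching G k M ∧ M.card = kMatchNum G k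

/-- A `k`-independent set: a set of vertices whose induced subgraph contains no `k`-path. -/
def IsKIndepSet {V : Type*} (G : SimpleGraph V) (k : ℕ) (S : Finset V) : Prop :=
  ∀ l : List V, IsKPath G k l → ¬ (∀ v ∈ l, v ∈ S)

/-- The `k`-independence number `α_k(G)`. -/
noncomputable def kIndepNum {V : Type*} (G : SimpleGraph V) (k : ℕ) : ℕ :=
  sSup {n | ∃ S : Finset V, IsKIndepSet G k S ∧ S.card = n}

/-- A `k`-vertex cover: a set of vertices meeting every `k`-path of `G`. -/
def IsKCover {V : Type*} (G : SimpleGraph V) (k : ℕ) (C : Finset V) : Prop :=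
  ∀ l : List V, IsKPath G k l → ∃ v ∈ l, v ∈ C

/-- The `k`-vertex cover number `τ_k(G)`. -/
noncomputable def kCoverNum {V : Type*} (G : SimpleGraph V) (k : ℕ) : ℕ :=
  sInf {n | ∃ C : Finset V, IsKCover G k C ∧ C.card = n}

/-- A dissociation set: a set of vertices inducing a subgraph of maximum degree at most 1,
i.e. every vertex of `S` has at most one neighbour inside `S`. -/
def IsDissocSet {V : Type*} (G : SimpleGraph V) (S : Finset V) : Prop :=
  ∀ v ∈ S, ∀ u ∈ S, ∀ w ∈ S, G.Adj v u → G.Adj v w → u = w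

/-- The dissociation number `α₃(G)`. -/
noncomputable def dissNum {V : Type*} (G : SimpleGraph V) : ℕ :=
  sSup {n | ∃ S : Finset V, IsDissocSet G S ∧ S.card = n}

/-- A maximum dissociation set: a dissociation set of cardinality `α₃(G)`. -/
def IsMaxDissocSet {V : Type*} (G : SimpleGraph V) (S : Finset V) : Prop :=
  IsDissocSet G S ∧ S.card = dissNum G

/-- `uv` is an `α₃`-critical edge of `G`: deleting it increases the dissociation number. -/
def IsAlpha3Critical {V : Type*} (G : SimpleGraph V) (u v : V) : Prop :=
  G.Adj u v ∧ dissNum G < dissNum (G.deleteEdges {s(u, v)})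

/-- `uv` is a `μ₃`-critical edge of `G`: deleting it decreases the `3`-matching number. -/
def IsMu3Critical {V : Type*} (G : SimpleGraph V) (u v : V) : Prop :=
  G.Adj u v ∧ kMatchNum (G.deleteEdges {s(u, v)}) 3 < kMatchNum G 3

/-- An insulated `α₃`-critical edge: an `α₃`-critical edge sharing no end-vertex with any
other `α₃`-critical edge. -/
def IsInsulated {V : Type*} (G : SimpleGraph V) (u v : V) : Prop :=
  IsAlpha3Critical G u v ∧
    ∀ x y : V, IsAlpha3Critical G x y → s(x, y) ≠ s(u, v) →
      x ≠ u ∧ x ≠ v ∧ y ≠ u ∧ y ≠ v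

/-- A flexible vertex: one lying in some but not all maximum dissociation sets. -/
def IsFlexible {V : Type*} (G : SimpleGraph V) (v : V) : Prop :=
  (∃ S : Finset V, IsMaxDissocSet G S ∧ v ∈ S) ∧
    (∃ S : Finset V, IsMaxDissocSet G S ∧ v ∉ S)

/-- The set of static-included vertices: vertices lying in every maximum dissociation set. -/
def staticIncluded {V : Type*} (G : SimpleGraph V) : Set V :=
  {v | ∀ S : Finset V, IsMaxDissocSet G S → v ∈ S}

/-- The set of static-excluded vertices: vertices lying in no maximum dissociation set. -/
def staticExcluded {V : Type*} (G : SimpleGraph V) : Set V :=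
  {v | ∀ S : Finset V, IsMaxDissocSet G S → v ∉ S}

/-- The (unordered) edge `uv` occurs as an edge of the path recorded by the list `l`. -/
def EdgeInList {V : Type*} (l : List V) (u v : V) : Prop :=
  ∃ p ∈ l.zip l.tail, p = (u, v) ∨ p = (v, u)

/-!
For every `k ≥ 1`, complementation gives `α_k + τ_k = |V|`, where `τ_k` is the least size of a set
meeting all `k`-paths. In a forest also `τ_k = μ_k`: among the vertex sets `B` that contain a
`k`-path and are joined to the rest of the graph through a single vertex `x`, take a minimal one.
Then `B \ {x}` contains no `k`-path, since otherwise its component containing such a path would be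
a smaller choice. Hence `x` meets every `k`-path that meets `B`; put `x` into the cover and a
`k`-path of `B` into the matching, discard `B`, and recurse. Deleting edges from a forest leaves a
forest, so it changes `α_k` and `μ_k` by opposite amounts.
-/

section KPaths

variable {V : Type*} {G : SimpleGraph V} {k : ℕ}

lemma IsKPath.ne_nil {l : List V} (hl : IsKPath G k l) (hk : k ≠ 0) : l ≠ [] :=
  List.ne_nil_of_length_pos (hl.1 ▸ Nat.pos_of_ne_zero hk)

lemma IsKPath.forall_mem_of_mem {l : List V} (hl : IsKPath G k l) {s : Set V}
    (hs : ∀ p ∈ l, ∀ q ∈ l, G.Adj p q → p ∈ s → q ∈ s) {a : V} (hal : a ∈ l) (has : a ∈ s) :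
    ∀ v ∈ l, v ∈ s := by
  have hchain : l.IsChain fun p q => p ∈ s ↔ q ∈ s :=
    List.IsChain.imp_of_mem_imp
      (fun p q hp hq hpq => ⟨hs p hp q hq hpq, hs q hq p hp hpq.symm⟩) hl.2.2
  have : IsTrans V fun p q => p ∈ s ↔ q ∈ s := ⟨fun _ _ _ => Iff.trans⟩
  have : Std.Symm fun p q : V => p ∈ s ↔ q ∈ s := ⟨fun _ _ => Iff.symm⟩
  have hall : ∀ ⦃p⦄, p ∈ l → ∀ ⦃q⦄, q ∈ l → (p ∈ s ↔ q ∈ s) :=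
    List.Pairwise.forall_of_forall (R := fun p q => p ∈ s ↔ q ∈ s) (fun _ _ => Iff.rfl)
      hchain.pairwise
  exact fun v hv => (hall hal hv).1 has

lemma not_isKIndepSet_iff {S : Finset V} :
    ¬ IsKIndepSet G k S ↔ ∃ l, IsKPath G k l ∧ ∀ v ∈ l, v ∈ S := by
  unfold IsKIndepSet
  push Not
  rfl

lemma isKIndepSet_empty (hk : k ≠ 0) : IsKIndepSet G k ∅ := fun _ hl hsub =>
  hl.ne_nil hk (List.eq_nil_iff_forall_not_mem.2 fun v hv => Finset.notMem_empty v (hsub v hv))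

lemma isKCover_univ [Fintype V] (hk : k ≠ 0) : IsKCover G k Finset.univ := fun _ hl =>
  (List.exists_mem_of_ne_nil _ (hl.ne_nil hk)).imp fun _ hv => ⟨hv, Finset.mem_univ _⟩

lemma isKMatching_empty : IsKMatching G k ∅ := by
  simp only [IsKMatching, Finset.notMem_empty, false_imp_iff, implies_true, Finset.coe_empty,
    Set.pairwise_empty, and_self]

lemma IsKMatching.insert [DecidableEq V] {M : Finset (List V)} {l : List V}
    (hM : IsKMatching G k M) (hl : IsKPath G k l) (hdisj : ∀ m ∈ M, ∀ v ∈ l, v ∉ m) :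
    IsKMatching G k (insert l M) := by
  refine ⟨Finset.forall_mem_insert _ _ _ |>.2 ⟨hl, hM.1⟩, ?_⟩
  rw [Finset.coe_insert, Set.pairwise_insert]
  exact ⟨hM.2, fun m hm _ => ⟨hdisj m hm, fun v hvm hvl => hdisj m hm v hvl hvm⟩⟩

lemma IsKMatching.card_le_card {M : Finset (List V)} {C : Finset V} (hM : IsKMatching G k M)
    (hC : IsKCover G k C) : M.card ≤ C.card := by
  refine Finset.card_le_card_of_forall_subsingleton (fun l v => v ∈ l) ?_ ?_
  · intro l hl
    obtain ⟨v, hvl, hvC⟩ := hC l (hM.1 l hl)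
    exact ⟨v, hvC, hvl⟩
  · rintro v - l ⟨hl, hvl⟩ m ⟨hm, hvm⟩
    by_contra hne
    exact hM.2 hl hm hne v hvl hvm

lemma isKIndepSet_compl [Fintype V] [DecidableEq V] {C : Finset V} :
    IsKIndepSet G k Cᶜ ↔ IsKCover G k C := by
  simp only [IsKIndepSet, IsKCover, Finset.mem_compl, not_forall, not_not, exists_prop]

lemma isDissocSet_iff_isKIndepSet_three {S : Finset V} :
    IsDissocSet G S ↔ IsKIndepSet G 3 S := by
  constructor
  · rintro hS l ⟨hlen, hnodup, hchain⟩ hsub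
    obtain ⟨a, b, c, rfl⟩ := List.length_eq_three.1 hlen
    have hadj : List.IsChain G.Adj [a, b, c] := hchain
    simp only [List.isChain_cons_cons, List.isChain_singleton, and_true] at hadj
    have hac : a = c :=
      hS b (hsub b (by simp)) a (hsub a (by simp)) c (hsub c (by simp)) hadj.1.symm hadj.2
    simp [hac] at hnodup
  · intro hS v hv u hu w hw hvu hvw
    by_contra huw
    have hpath : IsKPath G 3 [u, v, w] :=
      ⟨rfl, by simp [hvu.ne', hvw.ne, huw],
        show List.IsChain G.Adj [u, v, w] by simp [hvu.symm, hvw]⟩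
    exact hS _ hpath (by simp [hu, hv, hw])

lemma dissNum_eq_kIndepNum_three : dissNum G = kIndepNum G 3 := by
  simp only [dissNum, kIndepNum, isDissocSet_iff_isKIndepSet_three]

lemma IsKCover.kCoverNum_le_card {C : Finset V} (hC : IsKCover G k C) :
    kCoverNum G k ≤ C.card :=
  Nat.sInf_le ⟨C, hC, rfl⟩

section Finite

variable [Finite V]

lemma bddAbove_card_isKIndepSet :
    BddAbove {n | ∃ S : Finset V, IsKIndepSet G k S ∧ S.card = n} :=
  have := Fintype.ofFinite V
  ⟨Fintype.card V, by rintro _ ⟨S, -, rfl⟩; exact S.card_le_univ⟩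

lemma IsKIndepSet.card_le_kIndepNum {S : Finset V} (hS : IsKIndepSet G k S) :
    S.card ≤ kIndepNum G k :=
  le_csSup bddAbove_card_isKIndepSet ⟨S, hS, rfl⟩

lemma exists_isKIndepSet_card_eq_kIndepNum (hk : k ≠ 0) :
    ∃ S : Finset V, IsKIndepSet G k S ∧ S.card = kIndepNum G k :=
  Nat.sSup_mem (s := {n | ∃ S : Finset V, IsKIndepSet G k S ∧ S.card = n})
    ⟨0, ∅, isKIndepSet_empty hk, rfl⟩ bddAbove_card_isKIndepSet

lemma exists_isKCover_card_eq_kCoverNum (hk : k ≠ 0) :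
    ∃ C : Finset V, IsKCover G k C ∧ C.card = kCoverNum G k :=
  have := Fintype.ofFinite V
  Nat.sInf_mem (s := {n | ∃ C : Finset V, IsKCover G k C ∧ C.card = n})
    ⟨_, Finset.univ, isKCover_univ hk, rfl⟩

theorem kIndepNum_add_kCoverNum (hk : k ≠ 0) :
    kIndepNum G k + kCoverNum G k = Nat.card V := by
  classical
  cases nonempty_fintype V
  obtain ⟨S, hS, hScard⟩ := exists_isKIndepSet_card_eq_kIndepNum (G := G) hk
  obtain ⟨C, hC, hCcard⟩ := exists_isKCover_card_eq_kCoverNum (G := G) hk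
  have hle : kCoverNum G k ≤ Sᶜ.card :=
    (isKIndepSet_compl.1 (by rwa [compl_compl])).kCoverNum_le_card
  have hge : Cᶜ.card ≤ kIndepNum G k := (isKIndepSet_compl.2 hC).card_le_kIndepNum
  have hScompl := S.card_add_card_compl
  have hCcompl := C.card_add_card_compl
  rw [Nat.card_eq_fintype_card]
  omega

lemma IsKMatching.card_le_kMatchNum {M : Finset (List V)} (hk : k ≠ 0)
    (hM : IsKMatching G k M) : M.card ≤ kMatchNum G k :=
  have := Fintype.ofFinite V
  le_csSup
    ⟨Fintype.card V, by rintro _ ⟨N, hN, rfl⟩; exact hN.card_le_card (isKCover_univ hk)⟩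
    ⟨M, hM, rfl⟩

lemma kMatchNum_le_kCoverNum (hk : k ≠ 0) : kMatchNum G k ≤ kCoverNum G k := by
  obtain ⟨C, hC, hCcard⟩ := exists_isKCover_card_eq_kCoverNum (G := G) hk
  refine csSup_le ⟨0, ∅, isKMatching_empty, rfl⟩ ?_
  rintro _ ⟨M, hM, rfl⟩
  exact hCcard ▸ hM.card_le_card hC

end Finite

open Classical in
/-- The vertices of the connected component of `a` in the subgraph of `G` induced by `s`,
as a finite set of vertices of `G`. -/
noncomputable def componentIn (G : SimpleGraph V) (s : Finset V) (a : V) : Finset V :=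
  s.filter fun v => (G.induce (s : Set V)).spanningCoe.Reachable a v

lemma mem_componentIn {s : Finset V} {a v : V} :
    v ∈ componentIn G s a ↔ v ∈ s ∧ (G.induce (s : Set V)).spanningCoe.Reachable a v := by
  classical exact Finset.mem_filter

lemma componentIn_subset (s : Finset V) (a : V) : componentIn G s a ⊆ s := fun _ hv =>
  (mem_componentIn.1 hv).1

lemma self_mem_componentIn {s : Finset V} {a : V} (ha : a ∈ s) : a ∈ componentIn G s a :=
  mem_componentIn.2 ⟨ha, .refl _⟩

lemma mem_componentIn_of_adj {s : Finset V} {a p q : V} (hp : p ∈ componentIn G s a)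
    (hq : q ∈ s) (hpq : G.Adj p q) : q ∈ componentIn G s a := by
  obtain ⟨hps, hap⟩ := mem_componentIn.1 hp
  have hadj : (G.induce (s : Set V)).spanningCoe.Adj p q := by simp [hps, hq, hpq]
  exact mem_componentIn.2 ⟨hq, hap.trans hadj.reachable⟩

lemma eq_of_adj_of_reachable_deleteIncidenceSet (hG : G.IsAcyclic) {x y z : V}
    (hxy : G.Adj x y) (hxz : G.Adj x z) (hyz : (G.deleteIncidenceSet x).Reachable y z) :
    y = z := by
  by_contra hne
  refine isBridge_iff.1 (isAcyclic_iff_forall_adj_isBridge.1 hG hxy) ?_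
  have hxz' : (G.deleteEdges {s(x, y)}).Adj x z := by
    simp [deleteEdges_adj, hxz, Ne.symm hne, hxz.ne']
  have hle : G.deleteIncidenceSet x ≤ G.deleteEdges {s(x, y)} :=
    deleteEdges_anti (Set.singleton_subset_iff.2 ⟨hxy, Sym2.mem_mk_left x y⟩)
  exact hxz'.reachable.trans (hyz.symm.mono hle)

lemma eq_of_adj_of_mem_componentIn (hG : G.IsAcyclic) {s : Finset V} {a x y z : V}
    (hx : x ∉ s) (hy : y ∈ componentIn G s a) (hz : z ∈ componentIn G s a)
    (hxy : G.Adj x y) (hxz : G.Adj x z) : y = z := by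
  have hle : (G.induce (s : Set V)).spanningCoe ≤ G.deleteIncidenceSet x :=
    G.induce_deleteIncidenceSet_of_notMem (Finset.mem_coe.not.2 hx) ▸ spanningCoe_induce_le _ _
  refine eq_of_adj_of_reachable_deleteIncidenceSet hG hxy hxz (.mono hle ?_)
  exact (mem_componentIn.1 hy).2.symm.trans (mem_componentIn.1 hz).2

/-- `B` is attached to the rest of `A` only at `x`: every edge of `G` from `B` to `A \ B`
leaves `B` at `x`. -/
structure IsPendantAt (G : SimpleGraph V) (A B : Finset V) (x : V) : Prop where
  subset : B ⊆ A
  mem : x ∈ B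
  eq_of_adj : ∀ p ∈ B, ∀ q ∈ A, q ∉ B → G.Adj p q → p = x

lemma IsPendantAt.exists_componentIn [DecidableEq V] (hG : G.IsAcyclic) {A B : Finset V} {x a : V}
    (hB : IsPendantAt G A B x) (ha : a ∈ B.erase x) :
    ∃ y, IsPendantAt G A (componentIn G (B.erase x) a) y := by
  set C := componentIn G (B.erase x) a
  have hCB : C ⊆ B.erase x := componentIn_subset _ _
  obtain ⟨y, hyC, hy⟩ : ∃ y ∈ C, ∀ p ∈ C, G.Adj x p → p = y := by
    by_cases h : ∃ y ∈ C, G.Adj x y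
    · obtain ⟨y, hyC, hxy⟩ := h
      exact ⟨y, hyC, fun p hp hxp =>
        eq_of_adj_of_mem_componentIn hG (Finset.notMem_erase x B) hp hyC hxp hxy⟩
    · exact ⟨a, self_mem_componentIn ha, fun p hp hxp => (h ⟨p, hp, hxp⟩).elim⟩
  refine ⟨y, hCB.trans ((B.erase_subset x).trans hB.subset), hyC, fun p hp q hqA hqC hpq => ?_⟩
  obtain ⟨hpx, hpB⟩ := Finset.mem_erase.1 (hCB hp)
  have hqB : q ∈ B := by
    by_contra hqB
    exact hpx (hB.eq_of_adj p hpB q hqA hqB hpq)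
  have hqx : q = x := by
    by_contra hqx
    exact hqC (mem_componentIn_of_adj hp (Finset.mem_erase.2 ⟨hqx, hqB⟩) hpq)
  exact hy p hp (hqx ▸ hpq.symm)

theorem exists_isPendantAt_isKIndepSet_erase [DecidableEq V] (hG : G.IsAcyclic) (hk : k ≠ 0)
    {A : Finset V} (hA : ¬ IsKIndepSet G k A) :
    ∃ B x, IsPendantAt G A B x ∧ ¬ IsKIndepSet G k B ∧ IsKIndepSet G k (B.erase x) := by
  obtain ⟨l₀, hl₀, hl₀A⟩ := not_isKIndepSet_iff.1 hA
  obtain ⟨a₀, ha₀⟩ := List.exists_mem_of_ne_nil _ (hl₀.ne_nil hk)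
  have hAA : IsPendantAt G A A a₀ :=
    ⟨subset_rfl, hl₀A a₀ ha₀, fun _ _ q hq hq' => absurd hq hq'⟩
  obtain ⟨B, ⟨⟨x, hB⟩, hBdep⟩, hmin⟩ := exists_minimal_of_wellFoundedLT
    (fun B => (∃ x, IsPendantAt G A B x) ∧ ¬ IsKIndepSet G k B) ⟨A, ⟨a₀, hAA⟩, hA⟩
  refine ⟨B, x, hB, hBdep, by_contra fun hdep => ?_⟩
  obtain ⟨l, hl, hlB⟩ := not_isKIndepSet_iff.1 hdep
  obtain ⟨a, hal⟩ := List.exists_mem_of_ne_nil _ (hl.ne_nil hk)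
  have hlC : ∀ v ∈ l, v ∈ componentIn G (B.erase x) a :=
    hl.forall_mem_of_mem (s := componentIn G (B.erase x) a)
      (fun p _ q hq hpq hp => mem_componentIn_of_adj hp (hlB q hq) hpq) hal
      (self_mem_componentIn (hlB a hal))
  have hBC : B ⊆ componentIn G (B.erase x) a :=
    hmin ⟨hB.exists_componentIn hG (hlB a hal), not_isKIndepSet_iff.2 ⟨l, hl, hlC⟩⟩
      ((componentIn_subset _ _).trans (B.erase_subset x))
  exact Finset.notMem_erase x B (componentIn_subset _ _ (hBC hB.mem))

lemma IsPendantAt.isKIndepSet_sdiff_insert [DecidableEq V] {A B C : Finset V} {x : V}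
    (hB : IsPendantAt G A B x) (hBx : IsKIndepSet G k (B.erase x))
    (hC : IsKIndepSet G k ((A \ B) \ C)) : IsKIndepSet G k (A \ insert x C) := by
  intro l hl hsub
  have hlA : ∀ v ∈ l, v ∈ A ∧ v ≠ x ∧ v ∉ C := by simpa using hsub
  by_cases hlB : ∃ b ∈ l, b ∈ B
  · obtain ⟨b, hbl, hbB⟩ := hlB
    have hl_sub : ∀ v ∈ l, v ∈ B := hl.forall_mem_of_mem (s := B)
      (fun p hp q hq hpq hpB => by_contra fun hqB =>
        (hlA p hp).2.1 (hB.eq_of_adj p hpB q (hlA q hq).1 hqB hpq)) hbl hbB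
    exact hBx l hl fun v hv => Finset.mem_erase.2 ⟨(hlA v hv).2.1, hl_sub v hv⟩
  · refine hC l hl fun v hv => ?_
    have hvB : v ∉ B := fun hvB => hlB ⟨v, hv, hvB⟩
    exact Finset.mem_sdiff.2 ⟨Finset.mem_sdiff.2 ⟨(hlA v hv).1, hvB⟩, (hlA v hv).2.2⟩

theorem exists_isKIndepSet_sdiff_isKMatching_card_le_of_isAcyclic [DecidableEq V]
    (hG : G.IsAcyclic) (hk : k ≠ 0) (A : Finset V) :
    ∃ (C : Finset V) (M : Finset (List V)), IsKIndepSet G k (A \ C) ∧ IsKMatching G k M ∧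
      (∀ l ∈ M, ∀ v ∈ l, v ∈ A) ∧ C.card ≤ M.card := by
  induction A using Finset.strongInduction with
  | H A ih =>
    by_cases hA : IsKIndepSet G k A
    · exact ⟨∅, ∅, by rwa [Finset.sdiff_empty], isKMatching_empty, by simp, le_rfl⟩
    obtain ⟨B, x, hB, hBdep, hBx⟩ := exists_isPendantAt_isKIndepSet_erase hG hk hA
    obtain ⟨l, hl, hlB⟩ := not_isKIndepSet_iff.1 hBdep
    obtain ⟨C, M, hC, hM, hMA, hcard⟩ :=
      ih (A \ B) (Finset.sdiff_ssubset hB.subset ⟨x, hB.mem⟩)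
    have hdisj : ∀ m ∈ M, ∀ v ∈ l, v ∉ m := fun m hm v hvl hvm =>
      (Finset.mem_sdiff.1 (hMA m hm v hvm)).2 (hlB v hvl)
    have hlM : l ∉ M := fun hlM =>
      have ⟨v, hv⟩ := List.exists_mem_of_ne_nil l (hl.ne_nil hk)
      hdisj l hlM v hv hv
    refine ⟨insert x C, insert l M, hB.isKIndepSet_sdiff_insert hBx hC, hM.insert hl hdisj, ?_, ?_⟩
    · exact (Finset.forall_mem_insert _ _ _).2 ⟨fun v hv => hB.subset (hlB v hv),
        fun m hm v hv => (Finset.mem_sdiff.1 (hMA m hm v hv)).1⟩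
    · calc (insert x C).card ≤ C.card + 1 := Finset.card_insert_le x C
        _ ≤ M.card + 1 := Nat.succ_le_succ hcard
        _ = (insert l M).card := (Finset.card_insert_of_notMem hlM).symm

theorem kMatchNum_eq_kCoverNum_of_isAcyclic [Finite V] (hG : G.IsAcyclic) (hk : k ≠ 0) :
    kMatchNum G k = kCoverNum G k := by
  classical
  cases nonempty_fintype V
  obtain ⟨C, M, hC, hM, -, hcard⟩ :=
    exists_isKIndepSet_sdiff_isKMatching_card_le_of_isAcyclic hG hk Finset.univ
  rw [← Finset.compl_eq_univ_sdiff, isKIndepSet_compl] at hC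
  exact (kMatchNum_le_kCoverNum hk).antisymm
    (hC.kCoverNum_le_card.trans (hcard.trans (hM.card_le_kMatchNum hk)))

theorem kIndepNum_add_kMatchNum_of_isAcyclic [Finite V] (hG : G.IsAcyclic) (hk : k ≠ 0) :
    kIndepNum G k + kMatchNum G k = Nat.card V := by
  rw [kMatchNum_eq_kCoverNum_of_isAcyclic hG hk, kIndepNum_add_kCoverNum hk]

theorem tree_alpha3Critical_iff_mu3Critical_general [Finite V] (hG : G.IsAcyclic) (hk : k ≠ 0)
    (s : Set (Sym2 V)) :
    kIndepNum G k < kIndepNum (G.deleteEdges s) k ↔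
      kMatchNum (G.deleteEdges s) k < kMatchNum G k := by
  have hsum := kIndepNum_add_kMatchNum_of_isAcyclic hG hk
  have hsum_delete :=
    kIndepNum_add_kMatchNum_of_isAcyclic (hG.anti (deleteEdges_le (G := G) s)) hk
  omega

end KPaths

/-- In a tree, an edge is `α₃`-critical iff it is `μ₃`-critical. -/
theorem tree_alpha3Critical_iff_mu3Critical {V : Type*} [Fintype V] [DecidableEq V]
    (T : SimpleGraph V) (hT : T.IsTree) (u v : V) (huv : T.Adj u v) :
    IsAlpha3Critical T u v ↔ IsMu3Critical T u v := by
  simp only [IsAlpha3Critical, IsMu3Critical, dissNum_eq_kIndepNum_three,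
    tree_alpha3Critical_iff_mu3Critical_general hT.isAcyclic three_ne_zero]
end

section
/- Let T be a tree and let 𝒜_T denote the set of static-included vertices of T. Then every end-vertex of each insulated α₃-critical edge of T has exactly one neighbor in 𝒜_T, and that neighbor is an isolated vertex of the induced subgraph T[𝒜_T]. -/
open SimpleGraph

/-!
Let `uv` be an insulated critical edge and let `S` be a largest dissociation set of `G - uv`. Then
`S` has `α₃(G) + 1` elements and contains `u` and `v`, and each of them has a further neighbour in
`S`: if, say, only `v` had one, `w`, then `S` would be a dissociation set of `G - vw`, so that `vw`
would be a critical edge meeting `uv`.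

Since `S \ {u}` and `S \ {v}` are maximum dissociation sets of `G`, the vertex `v` is not
static-included and `w` is its only neighbour that can be. That `w` is static-included follows by
exchanging, along a bridge, the parts of `S` and of a maximum dissociation set `M` of `G` with
`w ∉ M`: the sizes of the two resulting sets add up to `2 α₃(G) + 1`, so one of them is again a
largest dissociation set of `G - uv`. Exchanging along `vw` shows that `M` contains `v` or `w`, and
exchanging along `uv` that it contains `w`.
-/

section Dissociation

variable {V : Type*} {G H : SimpleGraph V} {S X : Finset V} {u v : V}

theorem IsDissocSet.of_adj_imp (hS : IsDissocSet H S)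
    (h : ∀ a ∈ S, ∀ b ∈ S, G.Adj a b → H.Adj a b) : IsDissocSet G S :=
  fun a ha b hb c hc hab hac => hS a ha b hb c hc (h a ha b hb hab) (h a ha c hc hac)

theorem IsDissocSet.anti (hGH : G ≤ H) (hS : IsDissocSet H S) : IsDissocSet G S :=
  hS.of_adj_imp fun _ _ _ _ hab => hGH hab

theorem IsDissocSet.subset (hXS : X ⊆ S) (hS : IsDissocSet G S) : IsDissocSet G X :=
  fun a ha b hb c hc => hS a (hXS ha) b (hXS hb) c (hXS hc)

theorem IsDissocSet.of_deleteEdges_of_notMem (hS : IsDissocSet (G.deleteEdges {s(u, v)}) S)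
    (hu : u ∉ S) : IsDissocSet G S :=
  hS.of_adj_imp fun a ha b hb hab => deleteEdges_adj.2 ⟨hab, by
    rw [Set.mem_singleton_iff, Sym2.eq_iff]
    rintro (⟨rfl, -⟩ | ⟨-, rfl⟩)
    exacts [hu ha, hu hb]⟩

/-- The dissociation sets of `G` have bounded size, i.e. `α₃(G)` is finite; otherwise `dissNum G`
is the junk value `0`. -/
def HasFiniteDissNum (G : SimpleGraph V) : Prop :=
  ∃ n, ∀ S : Finset V, IsDissocSet G S → S.card ≤ n

theorem HasFiniteDissNum.bddAbove (hG : HasFiniteDissNum G) :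
    BddAbove {n | ∃ S : Finset V, IsDissocSet G S ∧ S.card = n} := by
  obtain ⟨n, hn⟩ := hG
  refine ⟨n, ?_⟩
  rintro _ ⟨S, hS, rfl⟩
  exact hn S hS

theorem hasFiniteDissNum_of_dissNum_pos (h : 0 < dissNum G) : HasFiniteDissNum G := by
  by_contra hG
  have h_unbdd : ¬ BddAbove {n | ∃ S : Finset V, IsDissocSet G S ∧ S.card = n} :=
    fun ⟨n, hn⟩ => hG ⟨n, fun S hS => hn ⟨S, hS, rfl⟩⟩
  exact h.ne' (Nat.sSup_of_not_bddAbove h_unbdd)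

theorem IsDissocSet.card_le_dissNum (hG : HasFiniteDissNum G) (hS : IsDissocSet G S) :
    S.card ≤ dissNum G :=
  le_csSup hG.bddAbove ⟨S, hS, rfl⟩

theorem HasFiniteDissNum.exists_isMaxDissocSet (hG : HasFiniteDissNum G) :
    ∃ S : Finset V, IsMaxDissocSet G S := by
  have h_nonempty : {n | ∃ S : Finset V, IsDissocSet G S ∧ S.card = n}.Nonempty :=
    ⟨0, ∅, by simp [IsDissocSet], rfl⟩
  exact Nat.sSup_mem h_nonempty hG.bddAbove

theorem IsDissocSet.isMaxDissocSet_of_forall_card_le (hS : IsDissocSet G S)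
    (h : ∀ M : Finset V, IsDissocSet G M → M.card ≤ S.card) : IsMaxDissocSet G S := by
  have hG : HasFiniteDissNum G := ⟨S.card, h⟩
  obtain ⟨M, hM, hM_card⟩ := hG.exists_isMaxDissocSet
  exact ⟨hS, (hS.card_le_dissNum hG).antisymm (hM_card ▸ h M hM)⟩

theorem HasFiniteDissNum.mono (hGH : G ≤ H) (hG : HasFiniteDissNum G) : HasFiniteDissNum H := by
  obtain ⟨n, hn⟩ := hG
  exact ⟨n, fun S hS => hn S (hS.anti hGH)⟩

theorem HasFiniteDissNum.deleteEdges_singleton (hG : HasFiniteDissNum G) (u v : V) :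
    HasFiniteDissNum (G.deleteEdges {s(u, v)}) := by
  classical
  obtain ⟨n, hn⟩ := hG
  refine ⟨n + 1, fun S hS => ?_⟩
  have h_erase : (S.erase u).card ≤ n :=
    hn _ ((hS.subset (S.erase_subset u)).of_deleteEdges_of_notMem (S.notMem_erase u))
  have := Finset.pred_card_le_card_erase (s := S) (a := u)
  omega

end Dissociation

section CriticalWitness

variable {V : Type*} {G : SimpleGraph V} {S M P : Finset V} {u v w x : V}

/-- `S` witnesses that `uv` is an `α₃`-critical edge of `G`: it is a dissociation set of `G - uv`
larger than every dissociation set of `G`. The sizes are compared with those of the sets, not with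
`dissNum G`, which is a junk value when `α₃(G)` is infinite. -/
def IsCriticalWitness (G : SimpleGraph V) (u v : V) (S : Finset V) : Prop :=
  IsDissocSet (G.deleteEdges {s(u, v)}) S ∧ ∀ M : Finset V, IsDissocSet G M → M.card < S.card

theorem IsCriticalWitness.symm (hS : IsCriticalWitness G u v S) : IsCriticalWitness G v u S := by
  rwa [IsCriticalWitness, Sym2.eq_swap]

theorem IsCriticalWitness.not_isDissocSet (hS : IsCriticalWitness G u v S) : ¬ IsDissocSet G S :=
  fun h => (hS.2 S h).false

theorem IsCriticalWitness.of_card_le (hS : IsCriticalWitness G u v S)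
    (hP : IsDissocSet (G.deleteEdges {s(u, v)}) P) (h : S.card ≤ P.card) :
    IsCriticalWitness G u v P :=
  ⟨hP, fun M hM => (hS.2 M hM).trans_le h⟩

theorem IsCriticalWitness.adj (hS : IsCriticalWitness G u v S) : G.Adj u v := by
  by_contra huv
  refine hS.not_isDissocSet (hS.1.of_adj_imp fun a _ b _ hab => ?_)
  refine deleteEdges_adj.2 ⟨hab, fun h => ?_⟩
  rw [← mem_edgeSet, ← Set.mem_singleton_iff.1 h] at huv
  exact huv hab

theorem IsCriticalWitness.left_mem (hS : IsCriticalWitness G u v S) : u ∈ S :=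
  not_imp_comm.1 hS.1.of_deleteEdges_of_notMem hS.not_isDissocSet

theorem IsCriticalWitness.right_mem (hS : IsCriticalWitness G u v S) : v ∈ S :=
  hS.symm.left_mem

theorem IsCriticalWitness.isMaxDissocSet_erase_left [DecidableEq V]
    (hS : IsCriticalWitness G u v S) : IsMaxDissocSet G (S.erase u) := by
  have h_dissoc : IsDissocSet G (S.erase u) :=
    (hS.1.subset (S.erase_subset u)).of_deleteEdges_of_notMem (S.notMem_erase u)
  refine h_dissoc.isMaxDissocSet_of_forall_card_le fun M hM => ?_
  rw [Finset.card_erase_of_mem hS.left_mem]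
  exact Nat.le_sub_one_of_lt (hS.2 M hM)

theorem IsCriticalWitness.isMaxDissocSet_erase_right [DecidableEq V]
    (hS : IsCriticalWitness G u v S) : IsMaxDissocSet G (S.erase v) :=
  hS.symm.isMaxDissocSet_erase_left

theorem IsCriticalWitness.card_eq_add_one (hS : IsCriticalWitness G u v S)
    (hM : IsMaxDissocSet G M) : S.card = M.card + 1 := by
  classical
  rw [hM.2, ← hS.isMaxDissocSet_erase_left.2, Finset.card_erase_add_one hS.left_mem]

theorem isAlpha3Critical_iff_exists_isCriticalWitness :
    IsAlpha3Critical G u v ↔ ∃ S : Finset V, IsCriticalWitness G u v S := by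
  constructor
  · rintro ⟨-, h_lt⟩
    have hH := hasFiniteDissNum_of_dissNum_pos (Nat.zero_lt_of_lt h_lt)
    have hG := hH.mono (deleteEdges_le {s(u, v)})
    obtain ⟨S, hS, hS_card⟩ := hH.exists_isMaxDissocSet
    exact ⟨S, hS, fun M hM => ((hM.card_le_dissNum hG).trans_lt h_lt).trans_eq hS_card.symm⟩
  · rintro ⟨S, hS⟩
    have hG : HasFiniteDissNum G := ⟨S.card, fun M hM => (hS.2 M hM).le⟩
    obtain ⟨M, hM, hM_card⟩ := hG.exists_isMaxDissocSet
    refine ⟨hS.adj, hM_card ▸ (hS.2 M hM).trans_le ?_⟩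
    exact hS.1.card_le_dissNum (hG.deleteEdges_singleton u v)

theorem IsCriticalWitness.exists_adj_or_adj (hS : IsCriticalWitness G u v S) :
    ∃ w ∈ S, (w ≠ v ∧ G.Adj u w) ∨ (w ≠ u ∧ G.Adj v w) := by
  by_contra! h
  have hu : ∀ x ∈ S, G.Adj u x → x = v := fun x hx => not_imp_not.1 (h x hx).1
  have hv : ∀ x ∈ S, G.Adj v x → x = u := fun x hx => not_imp_not.1 (h x hx).2
  refine hS.not_isDissocSet fun a ha b hb c hc hab hac => ?_
  obtain rfl | hau := eq_or_ne a u
  · rw [hu b hb hab, hu c hc hac]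
  obtain rfl | hav := eq_or_ne a v
  · rw [hv b hb hab, hv c hc hac]
  have h_deleteEdges {y : V} (hay : G.Adj a y) : (G.deleteEdges {s(u, v)}).Adj a y := by
    simp [hay, hau, hav]
  exact hS.1 a ha b hb c hc (h_deleteEdges hab) (h_deleteEdges hac)

theorem IsCriticalWitness.eq_of_adj_of_adj (hS : IsCriticalWitness G u v S)
    (hx : x ∈ S) (hxu : x ≠ u) (hvx : G.Adj v x) (hw : w ∈ S) (hwu : w ≠ u) (hvw : G.Adj v w) :
    x = w := by
  classical
  exact hS.isMaxDissocSet_erase_left.1 v (Finset.mem_erase.2 ⟨hS.adj.ne', hS.right_mem⟩)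
    x (Finset.mem_erase.2 ⟨hxu, hx⟩) w (Finset.mem_erase.2 ⟨hwu, hw⟩) hvx hvw

theorem IsCriticalWitness.of_forall_not_adj (hS : IsCriticalWitness G u v S)
    (hu : ∀ x ∈ S, x ≠ v → ¬ G.Adj u x) (hw : w ∈ S) (hwu : w ≠ u) (hvw : G.Adj v w) :
    IsCriticalWitness G v w S := by
  classical
  have hu' : ∀ x ∈ S, G.Adj u x → x = v := fun x hx => not_imp_not.1 (hu x hx)
  have hv : ∀ x ∈ S, (G.deleteEdges {s(v, w)}).Adj v x → x = u := by
    intro x hx hvx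
    obtain ⟨hvx, hne⟩ := deleteEdges_adj.1 hvx
    by_contra hxu
    obtain rfl : x = w := hS.eq_of_adj_of_adj hx hxu hvx hw hwu hvw
    exact hne rfl
  refine ⟨fun a ha b hb c hc hab hac => ?_, hS.2⟩
  obtain rfl | hav := eq_or_ne a v
  · rw [hv b hb hab, hv c hc hac]
  replace hab := deleteEdges_le _ hab
  replace hac := deleteEdges_le _ hac
  obtain rfl | hau := eq_or_ne a u
  · rw [hu' b hb hab, hu' c hc hac]
  have h_ne {y : V} (hay : G.Adj a y) : y ≠ u := by
    rintro rfl
    exact hav (hu' a ha hay.symm)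
  exact hS.isMaxDissocSet_erase_left.1 a (Finset.mem_erase.2 ⟨hau, ha⟩)
    b (Finset.mem_erase.2 ⟨h_ne hab, hb⟩) c (Finset.mem_erase.2 ⟨h_ne hac, hc⟩) hab hac

theorem IsCriticalWitness.eq_of_mem_staticIncluded (hS : IsCriticalWitness G u v S)
    (hw : w ∈ S) (hwu : w ≠ u) (hvw : G.Adj v w) (hx : x ∈ staticIncluded G) (hvx : G.Adj v x) :
    x = w := by
  classical
  obtain ⟨hxu, hxS⟩ := Finset.mem_erase.1 (hx _ hS.isMaxDissocSet_erase_left)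
  exact hS.eq_of_adj_of_adj hxS hxu hvx hw hwu hvw

theorem IsCriticalWitness.right_notMem_staticIncluded (hS : IsCriticalWitness G u v S) :
    v ∉ staticIncluded G := by
  classical
  exact fun hv => S.notMem_erase v (hv _ hS.isMaxDissocSet_erase_right)

theorem IsCriticalWitness.not_adj_of_mem_staticIncluded (hS : IsCriticalWitness G u v S)
    (hw : w ∈ staticIncluded G) (hvw : G.Adj v w) (hx : x ∈ staticIncluded G) : ¬ G.Adj w x := by
  classical
  intro hwx
  have h_max := hS.isMaxDissocSet_erase_left
  have hxv : x = v := h_max.1 w (hw _ h_max) x (hx _ h_max)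
    v (Finset.mem_erase.2 ⟨hS.adj.ne', hS.right_mem⟩) hwx hvw.symm
  exact hS.right_notMem_staticIncluded (hxv ▸ hx)

theorem IsInsulated.symm (h : IsInsulated G u v) : IsInsulated G v u := by
  refine ⟨?_, fun x y hxy hne => ?_⟩
  · rw [IsAlpha3Critical, adj_comm, Sym2.eq_swap]
    exact h.1
  · have := h.2 x y hxy (Sym2.eq_swap (a := v) ▸ hne)
    tauto

theorem IsInsulated.exists_adj (h : IsInsulated G u v) (hS : IsCriticalWitness G u v S) :
    ∃ x ∈ S, x ≠ v ∧ G.Adj u x := by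
  by_contra! hu
  obtain ⟨w, hw, ⟨hwv, huw⟩ | ⟨hwu, hvw⟩⟩ := hS.exists_adj_or_adj
  · exact hu w hw hwv huw
  · have h_critical : IsAlpha3Critical G v w :=
      isAlpha3Critical_iff_exists_isCriticalWitness.2
        ⟨S, hS.of_forall_not_adj hu hw hwu hvw⟩
    refine (h.2 v w h_critical ?_).2.1 rfl
    rw [Sym2.eq_swap, Ne, Sym2.congr_left]
    exact hwu

end CriticalWitness

section Splice

variable {V : Type*} {G : SimpleGraph V} {C : Set V} {X S M : Finset V} {u v x : V}

open scoped Classical in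
/-- The set that agrees with `X` inside `C` and with `S` outside `C`: the `Finset` analogue of
`Set.ite C X S`. -/
noncomputable def splice (C : Set V) (X S : Finset V) : Finset V :=
  X.filter (· ∈ C) ∪ S.filter (· ∉ C)

theorem mem_splice_of_mem (hx : x ∈ C) : x ∈ splice C X S ↔ x ∈ X := by
  simp [splice, hx]

theorem mem_splice_of_notMem (hx : x ∉ C) : x ∈ splice C X S ↔ x ∈ S := by
  simp [splice, hx]

theorem card_splice_add_card_splice (C : Set V) (X S : Finset V) :
    (splice C X S).card + (splice C S X).card = X.card + S.card := by
  classical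
  rw [splice, splice, Finset.card_union_of_disjoint (Finset.disjoint_filter_filter_not _ _ _),
    Finset.card_union_of_disjoint (Finset.disjoint_filter_filter_not _ _ _),
    ← Finset.card_filter_add_card_filter_not (s := X) (· ∈ C),
    ← Finset.card_filter_add_card_filter_not (s := S) (· ∈ C)]
  ac_rfl

theorem isDissocSet_splice (hX : IsDissocSet G X) (hS : IsDissocSet G S)
    (h : ∀ x ∈ C, ∀ y ∉ C, x ∈ X → y ∈ S → ¬ G.Adj x y) : IsDissocSet G (splice C X S) := by
  intro a ha b hb c hc hab hac
  by_cases haC : a ∈ C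
  · rw [mem_splice_of_mem haC] at ha
    have h_mem {y : V} (hy : y ∈ splice C X S) (hay : G.Adj a y) : y ∈ X := by
      by_cases hyC : y ∈ C
      · exact (mem_splice_of_mem hyC).1 hy
      · exact absurd hay (h a haC y hyC ha ((mem_splice_of_notMem hyC).1 hy))
    exact hX a ha b (h_mem hb hab) c (h_mem hc hac) hab hac
  · rw [mem_splice_of_notMem haC] at ha
    have h_mem {y : V} (hy : y ∈ splice C X S) (hay : G.Adj a y) : y ∈ S := by
      by_cases hyC : y ∈ C
      · exact absurd hay.symm (h y hyC a haC ((mem_splice_of_mem hyC).1 hy) ha)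
      · exact (mem_splice_of_notMem hyC).1 hy
    exact hS a ha b (h_mem hb hab) c (h_mem hc hac) hab hac

theorem IsCriticalWitness.splice_or_splice (hS : IsCriticalWitness G u v S)
    (hM : IsMaxDissocSet G M)
    (h : ∀ x ∈ C, ∀ y ∉ C, (G.deleteEdges {s(u, v)}).Adj x y → x ∉ M ∧ y ∉ M) :
    IsCriticalWitness G u v (splice C S M) ∨ IsCriticalWitness G u v (splice C M S) := by
  have hM' := hM.1.anti (deleteEdges_le {s(u, v)})
  have h_left := isDissocSet_splice hS.1 hM' fun x hx y hy _ hyM hxy => (h x hx y hy hxy).2 hyM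
  have h_right := isDissocSet_splice hM' hS.1 fun x hx y hy hxM _ hxy => (h x hx y hy hxy).1 hxM
  have h_card := card_splice_add_card_splice C S M
  have hSM := hS.card_eq_add_one hM
  obtain h_le | h_le : S.card ≤ (splice C S M).card ∨ S.card ≤ (splice C M S).card := by omega
  · exact .inl (hS.of_card_le h_left h_le)
  · exact .inr (hS.of_card_le h_right h_le)

theorem exists_set_of_isBridge (h : G.IsBridge s(u, v)) :
    ∃ C : Set V, u ∈ C ∧ v ∉ C ∧ ∀ x ∈ C, ∀ y ∉ C, G.Adj x y → x = u ∧ y = v := by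
  refine ⟨{x | (G.deleteEdges {s(u, v)}).Reachable u x}, .rfl, isBridge_iff.1 h, ?_⟩
  intro x hx y hy hxy
  have h_edge : s(x, y) = s(u, v) := by
    by_contra hne
    exact hy (hx.trans (deleteEdges_adj.2 ⟨hxy, hne⟩).reachable)
  obtain hxy | ⟨rfl, -⟩ := Sym2.eq_iff.1 h_edge
  · exact hxy
  · exact absurd hx (isBridge_iff.1 h)

end Splice

section Bridges

variable {V : Type*} {G : SimpleGraph V} {S M P : Finset V} {u v w : V}

theorem IsInsulated.mem_or_mem_of_isMaxDissocSet (h : IsInsulated G u v)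
    (hS : IsCriticalWitness G u v S) (hw : w ∈ S) (hwu : w ≠ u) (hvw : G.Adj v w)
    (h_bridge : G.IsBridge s(v, w)) (hM : IsMaxDissocSet G M) : v ∈ M ∨ w ∈ M := by
  by_contra! hvwM
  obtain ⟨C, hvC, hwC, hC⟩ := exists_set_of_isBridge h_bridge
  obtain hP | hP := hS.splice_or_splice (C := C) hM fun x hx y hy hxy => by
    obtain ⟨rfl, rfl⟩ := hC x hx y hy (deleteEdges_le _ hxy)
    exact hvwM
  · obtain ⟨x, hx, hxu, hvx⟩ := h.symm.exists_adj hP.symm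
    by_cases hxC : x ∈ C
    · have hxw : x = w :=
        hS.eq_of_adj_of_adj ((mem_splice_of_mem hxC).1 hx) hxu hvx hw hwu hvw
      exact hwC (hxw ▸ hxC)
    · obtain ⟨-, rfl⟩ := hC v hvC x hxC hvx
      exact hvwM.2 ((mem_splice_of_notMem hxC).1 hx)
  · exact hvwM.1 ((mem_splice_of_mem hvC).1 hP.right_mem)

theorem IsInsulated.mem_of_isCriticalWitness (h : IsInsulated G u v)
    (hS : IsCriticalWitness G u v S) (hw : w ∈ S) (hwu : w ≠ u) (hvw : G.Adj v w)
    (h_bridge : G.IsBridge s(v, w)) (hP : IsCriticalWitness G u v P) : w ∈ P := by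
  classical
  obtain hv | hwP := h.mem_or_mem_of_isMaxDissocSet hS hw hwu hvw h_bridge
    hP.isMaxDissocSet_erase_right
  · exact absurd hv (P.notMem_erase v)
  · exact Finset.mem_of_mem_erase hwP

theorem IsInsulated.mem_staticIncluded (h : IsInsulated G u v) (hS : IsCriticalWitness G u v S)
    (hw : w ∈ S) (hwu : w ≠ u) (hvw : G.Adj v w) (huv_bridge : G.IsBridge s(u, v))
    (hvw_bridge : G.IsBridge s(v, w)) : w ∈ staticIncluded G := by
  intro M hM
  by_contra hwM
  have hvM : v ∈ M :=
    (h.mem_or_mem_of_isMaxDissocSet hS hw hwu hvw hvw_bridge hM).resolve_right hwM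
  obtain ⟨C, huC, hvC, hC⟩ := exists_set_of_isBridge huv_bridge
  have hwC : w ∉ C := fun hwC => hwu (hC w hwC v hvC hvw.symm).1
  obtain hP | hP := hS.splice_or_splice (C := C) hM fun x hx y hy hxy => by
    obtain ⟨hxy, hne⟩ := deleteEdges_adj.1 hxy
    obtain ⟨rfl, rfl⟩ := hC x hx y hy hxy
    exact absurd rfl hne
  · have hwP := h.mem_of_isCriticalWitness hS hw hwu hvw hvw_bridge hP
    exact hwM ((mem_splice_of_notMem hwC).1 hwP)
  · obtain ⟨x, hx, hxv, hux⟩ := h.exists_adj hP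
    have hxC : x ∈ C := by
      by_contra hxC
      exact hxv (hC u huC x hxC hux).2
    have huM : u ∈ M := (mem_splice_of_mem huC).1 hP.left_mem
    exact hxv (hM.1 u huM x ((mem_splice_of_mem hxC).1 hx) v hvM hux h.1.1)

end Bridges

theorem tree_insulated_endvertex_neighbor_general {V : Type*} (G : SimpleGraph V) (u v : V)
    (h : IsInsulated G u v) (h_bridge : ∀ w, G.Adj v w → G.IsBridge s(v, w)) :
    (∃! w : V, w ∈ staticIncluded G ∧ G.Adj v w) ∧
      ∀ w ∈ staticIncluded G, G.Adj v w → ∀ x ∈ staticIncluded G, ¬ G.Adj w x := by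
  obtain ⟨S, hS⟩ := isAlpha3Critical_iff_exists_isCriticalWitness.1 h.1
  obtain ⟨w, hw, hwu, hvw⟩ := h.symm.exists_adj hS.symm
  have huv_bridge : G.IsBridge s(u, v) := Sym2.eq_swap ▸ h_bridge u hS.adj.symm
  have hwA : w ∈ staticIncluded G :=
    h.mem_staticIncluded hS hw hwu hvw huv_bridge (h_bridge w hvw)
  refine ⟨⟨w, ⟨hwA, hvw⟩, fun x ⟨hxA, hvx⟩ => ?_⟩, fun x hxA hvx y hyA => ?_⟩
  · exact hS.eq_of_mem_staticIncluded hw hwu hvw hxA hvx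
  · exact hS.not_adj_of_mem_staticIncluded hxA hvx hyA

/-- Every end-vertex of each insulated `α₃`-critical edge of a tree `T` has exactly one
neighbour in `𝒜_T` (the set of static-included vertices), and that neighbour is an
isolated vertex of the induced subgraph `T[𝒜_T]`. -/
theorem tree_insulated_endvertex_neighbor {V : Type*} [Fintype V] [DecidableEq V]
    (T : SimpleGraph V) (hT : T.IsTree) (u v : V) (h : IsInsulated T u v) :
    ((∃! w : V, w ∈ staticIncluded T ∧ T.Adj u w) ∧
      ∀ w ∈ staticIncluded T, T.Adj u w → ∀ x ∈ staticIncluded T, ¬ T.Adj w x) ∧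
    ((∃! w : V, w ∈ staticIncluded T ∧ T.Adj v w) ∧
      ∀ w ∈ staticIncluded T, T.Adj v w → ∀ x ∈ staticIncluded T, ¬ T.Adj w x) :=
  have h_bridge {a b : V} : T.Adj a b → T.IsBridge s(a, b) :=
    fun hab => isAcyclic_iff_forall_adj_isBridge.1 hT.isAcyclic hab
  ⟨tree_insulated_endvertex_neighbor_general T v u h.symm fun _ => h_bridge,
    tree_insulated_endvertex_neighbor_general T u v h fun _ => h_bridge⟩
end
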